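/- arXiv:0904.2353 — 5 statements merged into one kernel-verified Lean document; each statement's English description precedes it below -/
import Mathlib

section
/- Define, for 0 < r < 1, k(r) := −1/(π r log(r²)) + π⁻¹ Σ_{j=0}^∞ ( r^{2j}/(1 − r^{1+2j})² + r^{2j}/(1 − r^{2j+1})² ). Then k(r) = −1/(π r log(r²)) + π⁻¹ (2 + 4r + 8r²) + O(r³) as r → 0⁺; that is, the function r ↦ ( k(r) + 1/(π r log(r²)) − π⁻¹(2 + 4r + 8r²) ) / r³ is bounded on some interval (0, δ) with δ > 0. -/
/-- The value `K(√r, √r)` of the Bergman kernel of the annulus `P_r` at the point `√r`. -/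
noncomputable def kVal (r : ℝ) : ℝ :=
  -1 / (Real.pi * r * Real.log (r ^ 2)) +
    Real.pi⁻¹ * ∑' j : ℕ,
      (r ^ (2 * j) / (1 - r ^ (1 + 2 * j)) ^ 2 + r ^ (2 * j) / (1 - r ^ (2 * j + 1)) ^ 2)

/-- `k(r) = −1/(π r log(r²)) + π⁻¹(2 + 4r + 8r²) + O(r³)` as `r → 0⁺`. -/
theorem kVal_asymptotics :
    ∃ δ > (0 : ℝ), ∃ C : ℝ, ∀ r : ℝ, 0 < r → r < δ →
      |(kVal r + 1 / (Real.pi * r * Real.log (r ^ 2)) -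
          Real.pi⁻¹ * (2 + 4 * r + 8 * r ^ 2)) / r ^ 3| ≤ C := by
  refine ⟨1 / 2, by norm_num, Real.pi⁻¹ * 100, fun r hr0 hr => ?_⟩
  set F : ℕ → ℝ := fun j =>
    (r ^ (2 * j) / (1 - r ^ (1 + 2 * j)) ^ 2 + r ^ (2 * j) / (1 - r ^ (2 * j + 1)) ^ 2) with hF
  have hle : ∀ n : ℕ, r ^ (n + 1) ≤ 1 / 2 := fun n => by
    have h1 : r ^ n ≤ 1 := pow_le_one₀ hr0.le (by linarith)
    have h2 : 0 < r ^ n := pow_pos hr0 n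
    rw [pow_succ]; nlinarith
  have key : ∀ (n : ℕ) (a : ℝ), 0 ≤ a → a / (1 - r ^ (n + 1)) ^ 2 ≤ 4 * a := fun n a ha => by
    have h := hle n
    have h2 : (1 : ℝ) / 4 ≤ (1 - r ^ (n + 1)) ^ 2 := by nlinarith
    rw [div_le_iff₀ (by linarith)]
    nlinarith
  have hF0 : ∀ j, 0 ≤ F j := fun j => by simp only [hF]; positivity
  have hFle : ∀ j, F j ≤ 8 * (r ^ 2) ^ j := fun j => by
    have := key (2 * j) (r ^ (2 * j)) (by positivity)
    simp only [hF]
    rw [add_comm 1 (2 * j), ← pow_mul]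
    linarith
  have hr2 : r ^ 2 < 1 := by nlinarith
  have hgeo : HasSum (fun j => 8 * (r ^ 2) ^ j) (8 * (1 - r ^ 2)⁻¹) :=
    (hasSum_geometric_of_lt_one (by positivity) hr2).mul_left 8
  have hS : Summable F := Summable.of_nonneg_of_le hF0 hFle hgeo.summable
  have hsplit : F 0 + F 1 + ∑' j, F (j + 2) = ∑' j, F j := by
    rw [← hS.sum_add_tsum_nat_add 2, Finset.sum_range_succ, Finset.sum_range_one]
  have hT0 : 0 ≤ ∑' j, F (j + 2) := tsum_nonneg fun j => hF0 _
  have hT1 : ∑' j, F (j + 2) ≤ r ^ 4 * (8 * (1 - r ^ 2)⁻¹) := by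
    rw [← (hgeo.mul_left (r ^ 4)).tsum_eq]
    refine Summable.tsum_le_tsum (fun j => (hFle (j + 2)).trans (le_of_eq (by ring)))
      ((summable_nat_add_iff 2).2 hS) (hgeo.mul_left (r ^ 4)).summable
  have hinv : (1 - r ^ 2)⁻¹ ≤ 2 := by
    rw [inv_le_comm₀ (by linarith) (by norm_num)]; nlinarith
  have hr3 : 0 < r ^ 3 := by positivity
  have hT2 : ∑' j, F (j + 2) ≤ 8 * r ^ 3 := by
    have : r ^ 4 * (8 * (1 - r ^ 2)⁻¹) ≤ r ^ 4 * 16 := by gcongr; linarith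
    nlinarith
  have e0 : F 0 = 2 + 4 * r + 6 * r ^ 2 + 2 * ((4 * r ^ 3 - 3 * r ^ 4) / (1 - r ^ (0 + 1)) ^ 2) := by
    have : (1 - r) ≠ 0 := by linarith
    simp only [hF]
    norm_num
    field_simp
    ring
  have e1 : F 1 = 2 * r ^ 2 + 2 * ((2 * r ^ 5 - r ^ 8) / (1 - r ^ (2 + 1)) ^ 2) := by
    have : (1 - r ^ 3) ≠ 0 := by have := hle 2; norm_num at this; linarith
    simp only [hF]
    norm_num
    field_simp
    ring
  have hr2' : r ^ 2 ≤ 1 := hr2.le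
  have p1 : 0 ≤ 4 * r ^ 3 - 3 * r ^ 4 := by nlinarith
  have h5 : r ^ 5 ≤ r ^ 3 := by nlinarith
  have h8 : r ^ 8 ≤ r ^ 5 := pow_le_pow_of_le_one hr0.le (by linarith) (by norm_num)
  have h50 : 0 < r ^ 5 := by positivity
  have h80 : 0 < r ^ 8 := by positivity
  have h40 : 0 < r ^ 4 := by positivity
  have p2 : 0 ≤ 2 * r ^ 5 - r ^ 8 := by linarith
  have k1 := key 0 _ p1
  have k2 := key 2 _ p2
  have k1' : 0 ≤ (4 * r ^ 3 - 3 * r ^ 4) / (1 - r ^ (0 + 1)) ^ 2 := by positivity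
  have k2' : 0 ≤ (2 * r ^ 5 - r ^ 8) / (1 - r ^ (2 + 1)) ^ 2 := by positivity
  have hk : kVal r + 1 / (Real.pi * r * Real.log (r ^ 2)) -
      Real.pi⁻¹ * (2 + 4 * r + 8 * r ^ 2) =
      Real.pi⁻¹ * (∑' j, F j - (2 + 4 * r + 8 * r ^ 2)) := by
    unfold kVal; ring
  have hpi : 0 < Real.pi⁻¹ := inv_pos.2 Real.pi_pos
  rw [hk, abs_div, abs_mul, abs_of_pos hpi, abs_of_pos hr3, div_le_iff₀ hr3, mul_assoc]
  refine mul_le_mul_of_nonneg_left ?_ hpi.le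
  rw [abs_le]
  constructor <;> linarith
end

section
/- Define, for 0 < r < 1, m(r) := −1/(π r² log(r²)) + π⁻¹ Σ_{j=0}^∞ ( 6 r^{1+6j}/(1 − r^{1+2j})⁴ + 2 r^{4j}/(1 − r^{1+2j})³ + 6 r^{2j−1}/(1 − r^{1+2j})⁴ − 2 r^{2j−1}/(1 − r^{2j+1})³ ). Then m(r) = −1/(π r² log(r²)) + π⁻¹ ( 4/r + 20 + 64 r ) + O(r²) as r → 0⁺. -/
/-- The value `K_{11̄}(√r, √r)` of the mixed second derivative of the Bergman kernel
of the annulus `P_r` at the point `√r`. -/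
noncomputable def mVal (r : ℝ) : ℝ :=
  -1 / (Real.pi * r ^ 2 * Real.log (r ^ 2)) +
    Real.pi⁻¹ * ∑' j : ℕ,
      (6 * r ^ (1 + 6 * (j : ℝ)) / (1 - r ^ (1 + 2 * (j : ℝ))) ^ 4 +
        2 * r ^ (4 * (j : ℝ)) / (1 - r ^ (1 + 2 * (j : ℝ))) ^ 3 +
        6 * r ^ (2 * (j : ℝ) - 1) / (1 - r ^ (1 + 2 * (j : ℝ))) ^ 4 -
        2 * r ^ (2 * (j : ℝ) - 1) / (1 - r ^ (2 * (j : ℝ) + 1)) ^ 3)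

lemma term_eq (r : ℝ) (h0 : 0 < r) (h1 : r < 1 / 2) (j : ℕ) :
    6 * r ^ (1 + 6 * (j : ℝ)) / (1 - r ^ (1 + 2 * (j : ℝ))) ^ 4 +
        2 * r ^ (4 * (j : ℝ)) / (1 - r ^ (1 + 2 * (j : ℝ))) ^ 3 +
        6 * r ^ (2 * (j : ℝ) - 1) / (1 - r ^ (1 + 2 * (j : ℝ))) ^ 4 -
        2 * r ^ (2 * (j : ℝ) - 1) / (1 - r ^ (2 * (j : ℝ) + 1)) ^ 3
      = 4 * r ^ (2 * j) / r * ((1 + r ^ (2 * j + 1) + (r ^ (2 * j + 1)) ^ 2)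
          / (1 - r ^ (2 * j + 1)) ^ 4) := by
  have e1 : r ^ (1 + 6 * (j : ℝ)) = r ^ (6 * j + 1) := by
    rw [← Real.rpow_natCast]; congr 1; push_cast; ring
  have e2 : r ^ (1 + 2 * (j : ℝ)) = r ^ (2 * j + 1) := by
    rw [← Real.rpow_natCast]; congr 1; push_cast; ring
  have e3 : r ^ (4 * (j : ℝ)) = r ^ (4 * j) := by
    rw [← Real.rpow_natCast]; congr 1; push_cast; ring
  have e4 : r ^ (2 * (j : ℝ) - 1) = r ^ (2 * j) / r := by
    rw [Real.rpow_sub_one h0.ne', ← Real.rpow_natCast]; congr 2; push_cast; ring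
  have e5 : r ^ (2 * (j : ℝ) + 1) = r ^ (2 * j + 1) := by
    rw [add_comm, e2]
  rw [e1, e2, e3, e4, e5]
  have hx : r ^ (2 * j + 1) < 1 := pow_lt_one₀ h0.le (by linarith) (by omega)
  have f1 : r ^ (6 * j + 1) = (r ^ (2 * j)) ^ 3 * r := by ring
  have f2 : r ^ (2 * j + 1) = r ^ (2 * j) * r := by ring
  have f3 : r ^ (4 * j) = (r ^ (2 * j)) ^ 2 := by ring
  rw [f2] at hx
  rw [f1, f2, f3]
  generalize r ^ (2 * j) = y at *
  have hne : 1 - y * r ≠ 0 := by linarith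
  field_simp
  ring

lemma quot_bound (x p A : ℝ) (hx : x ≤ 1 / 2) (hp : |p| ≤ A) :
    |p / (1 - x) ^ 4| ≤ 16 * A := by
  have h : (1 / 2 : ℝ) ^ 4 ≤ (1 - x) ^ 4 := by gcongr; linarith
  have hpos : 0 < (1 - x) ^ 4 := by linarith [show (0 : ℝ) < (1 / 2) ^ 4 by norm_num]
  have hA := (abs_nonneg p).trans hp
  rw [abs_div, abs_of_pos hpos, div_le_iff₀ hpos]
  nlinarith

theorem mVal_asymptotics :
    ∃ δ > (0 : ℝ), ∃ C : ℝ, ∀ r : ℝ, 0 < r → r < δ →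
      |(mVal r + 1 / (Real.pi * r ^ 2 * Real.log (r ^ 2)) -
          Real.pi⁻¹ * (4 / r + 20 + 64 * r)) / r ^ 2| ≤ C := by
  refine ⟨1 / 2, by norm_num, Real.pi⁻¹ * 20000, fun r h0 h1 => ?_⟩
  unfold mVal
  simp_rw [term_eq r h0 h1]
  set f : ℕ → ℝ := fun j => 4 * r ^ (2 * j) / r *
    ((1 + r ^ (2 * j + 1) + (r ^ (2 * j + 1)) ^ 2) / (1 - r ^ (2 * j + 1)) ^ 4) with hf
  have hb : ∀ j : ℕ, ‖f (j + 2)‖ ≤ 192 * r ^ 2 * (1 / 4) ^ j := by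
    intro j
    have hx0 : 0 ≤ r ^ (2 * (j + 2) + 1) := by positivity
    have hx : r ^ (2 * (j + 2) + 1) ≤ 1 / 2 :=
      (pow_le_of_le_one h0.le (by linarith) (by omega)).trans h1.le
    have hq := quot_bound (r ^ (2 * (j + 2) + 1))
      (1 + r ^ (2 * (j + 2) + 1) + (r ^ (2 * (j + 2) + 1)) ^ 2) 2 hx
      (by rw [abs_of_nonneg (by positivity)]; nlinarith)
    have hp : |4 * r ^ (2 * (j + 2)) / r| ≤ 2 * r ^ 2 * (1 / 4) ^ j := by
      rw [abs_of_nonneg (by positivity)]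
      have : 4 * r ^ (2 * (j + 2)) / r = 4 * r * r ^ 2 * (r ^ 2) ^ j := by
        field_simp
        ring
      rw [this]
      gcongr
      · linarith
      · nlinarith
    simp only [hf, Real.norm_eq_abs, abs_mul]
    calc _ ≤ (2 * r ^ 2 * (1 / 4) ^ j) * (16 * 2) := by gcongr
      _ ≤ _ := by
        have : 0 ≤ r ^ 2 * (1 / 4) ^ j := by positivity
        linarith
  have hg : HasSum (fun j : ℕ => 192 * r ^ 2 * (1 / 4 : ℝ) ^ j) (192 * r ^ 2 * (1 - 1 / 4)⁻¹) :=
    (hasSum_geometric_of_lt_one (by norm_num) (by norm_num)).mul_left _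
  have hs2 : Summable (fun j => f (j + 2)) := Summable.of_norm_bounded hg.summable hb
  have ht : |∑' j, f (j + 2)| ≤ 256 * r ^ 2 := by
    have := tsum_of_norm_bounded hg hb
    rw [Real.norm_eq_abs] at this
    linarith
  have hs : Summable f := (summable_nat_add_iff 2).1 hs2
  have hsum := hs.sum_add_tsum_nat_add 2
  rw [Finset.sum_range_succ, Finset.sum_range_one] at hsum
  have hr1 : 1 - r ≠ 0 := by linarith
  have hx1 : r ^ 3 ≤ 1 / 2 := (pow_le_of_le_one h0.le (by linarith) (by omega)).trans h1.le
  have hx0 : 0 < r ^ 3 := by positivity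
  have hr3 : 1 - r ^ 3 ≠ 0 := by linarith
  have hf0 : f 0 - (4 / r + 20 + 60 * r)
      = r ^ 2 * ((136 - 284 * r + 220 * r ^ 2 - 60 * r ^ 3) / (1 - r) ^ 4) := by
    simp only [hf]
    norm_num
    field_simp
    ring
  have hf1 : f 1 - 4 * r
      = r ^ 2 * ((4 * r ^ 2 * (5 - 5 * r ^ 3 + 4 * (r ^ 3) ^ 2 - (r ^ 3) ^ 3)) / (1 - r ^ 3) ^ 4) := by
    simp only [hf]
    norm_num
    field_simp
    ring
  have b0 : |f 0 - (4 / r + 20 + 60 * r)| ≤ r ^ 2 * (16 * 700) := by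
    rw [hf0, abs_mul, abs_of_pos (by positivity : 0 < r ^ 2)]
    gcongr
    apply quot_bound _ _ _ h1.le
    rw [abs_le]; constructor <;> nlinarith
  have b1 : |f 1 - 4 * r| ≤ r ^ 2 * (16 * 60) := by
    rw [hf1, abs_mul, abs_of_pos (by positivity : 0 < r ^ 2)]
    gcongr
    apply quot_bound _ _ _ hx1
    generalize r ^ 3 = x at *
    rw [abs_mul, abs_of_pos (by positivity : 0 < 4 * r ^ 2)]
    have h4 : 4 * r ^ 2 ≤ 1 := by nlinarith
    have hx2 : x ^ 2 ≤ 1 := by nlinarith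
    have hx3 : x ^ 3 ≤ 1 := pow_le_one₀ hx0.le (by linarith)
    have hx3' : 0 < x ^ 3 := by positivity
    have h5 : |5 - 5 * x + 4 * x ^ 2 - x ^ 3| ≤ 60 := by
      rw [abs_le]; constructor <;> nlinarith
    calc _ ≤ 1 * (60 : ℝ) := by gcongr
      _ = 60 := by norm_num
  have key : |(∑' j, f j) - (4 / r + 20 + 64 * r)| ≤ 20000 * r ^ 2 := by
    rw [← hsum]
    rw [abs_le] at *
    have : 0 < r ^ 2 := by positivity
    constructor <;> linarith [b0.1, b0.2, b1.1, b1.2, ht.1, ht.2]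
  have hpi := Real.pi_pos
  have e : -1 / (Real.pi * r ^ 2 * Real.log (r ^ 2)) + Real.pi⁻¹ * ∑' j, f j
      + 1 / (Real.pi * r ^ 2 * Real.log (r ^ 2)) - Real.pi⁻¹ * (4 / r + 20 + 64 * r)
      = Real.pi⁻¹ * ((∑' j, f j) - (4 / r + 20 + 64 * r)) := by
    rw [neg_div]; ring
  rw [e, abs_div, abs_of_pos (by positivity : 0 < r ^ 2), div_le_iff₀ (by positivity), abs_mul,
    abs_of_pos (by positivity : 0 < Real.pi⁻¹), mul_assoc]
  gcongr
end

section
/- Define, for 0 < r < 1, n(r) := −4/(π r³ log(r²)) + π⁻¹ Σ_{j=0}^∞ ( 120 r^{10j+2}/(1 − r^{1+2j})⁶ + 96 r^{1+8j}/(1 − r^{1+2j})⁵ + 12 r^{6j}/(1 − r^{1+2j})⁴ + 120 r^{2j−2}/(1 − r^{2j+1})⁶ − 96 r^{2j−2}/(1 − r^{2j+1})⁵ + 12 r^{2j−2}/(1 − r^{2j+1})⁴ ). Then n(r) = −4/(π r³ log(r²)) + π⁻¹ ( 36/r² + 288/r ) + O(1) as r → 0⁺. -/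
/-- The value `K_{111̄1̄}(√r, √r)` of the fourth-order mixed derivative of the Bergman kernel
of the annulus `P_r` at the point `√r`. -/
noncomputable def nVal (r : ℝ) : ℝ :=
  -4 / (Real.pi * r ^ 3 * Real.log (r ^ 2)) +
    Real.pi⁻¹ * ∑' j : ℕ,
      (120 * r ^ (10 * (j : ℝ) + 2) / (1 - r ^ (1 + 2 * (j : ℝ))) ^ 6 +
        96 * r ^ (1 + 8 * (j : ℝ)) / (1 - r ^ (1 + 2 * (j : ℝ))) ^ 5 +
        12 * r ^ (6 * (j : ℝ)) / (1 - r ^ (1 + 2 * (j : ℝ))) ^ 4 +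
        120 * r ^ (2 * (j : ℝ) - 2) / (1 - r ^ (2 * (j : ℝ) + 1)) ^ 6 -
        96 * r ^ (2 * (j : ℝ) - 2) / (1 - r ^ (2 * (j : ℝ) + 1)) ^ 5 +
        12 * r ^ (2 * (j : ℝ) - 2) / (1 - r ^ (2 * (j : ℝ) + 1)) ^ 4)

lemma inv_bd (x : ℝ) (hx : x ≤ 1 / 2) (y c : ℝ) (hy : 0 ≤ y) (hyc : y ≤ c) (k : ℕ) :
    0 ≤ y / (1 - x) ^ k ∧ y / (1 - x) ^ k ≤ 2 ^ k * c := by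
  have h1 : (1 / 2 : ℝ) ≤ 1 - x := by linarith
  have h2 : (1 / 2 : ℝ) ^ k ≤ (1 - x) ^ k := pow_le_pow_left₀ (by norm_num) h1 k
  have h3 : (0 : ℝ) < (1 / 2 : ℝ) ^ k := by positivity
  refine ⟨div_nonneg hy (h3.le.trans h2), ?_⟩
  calc y / (1 - x) ^ k ≤ c / (1 / 2 : ℝ) ^ k := div_le_div₀ (hy.trans hyc) hyc h3 h2
    _ = 2 ^ k * c := by rw [one_div, inv_pow, div_inv_eq_mul, mul_comm]

/-- The summand. -/
noncomputable def nTerm (r : ℝ) (j : ℕ) : ℝ :=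
      (120 * r ^ (10 * (j : ℝ) + 2) / (1 - r ^ (1 + 2 * (j : ℝ))) ^ 6 +
        96 * r ^ (1 + 8 * (j : ℝ)) / (1 - r ^ (1 + 2 * (j : ℝ))) ^ 5 +
        12 * r ^ (6 * (j : ℝ)) / (1 - r ^ (1 + 2 * (j : ℝ))) ^ 4 +
        120 * r ^ (2 * (j : ℝ) - 2) / (1 - r ^ (2 * (j : ℝ) + 1)) ^ 6 -
        96 * r ^ (2 * (j : ℝ) - 2) / (1 - r ^ (2 * (j : ℝ) + 1)) ^ 5 +
        12 * r ^ (2 * (j : ℝ) - 2) / (1 - r ^ (2 * (j : ℝ) + 1)) ^ 4)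

lemma nTerm_succ_bd (r : ℝ) (h0 : 0 < r) (h1 : r < 1 / 2) (j : ℕ) :
    ‖nTerm r (j + 1)‖ ≤ 30000 * (1 / 4 : ℝ) ^ j := by
  have key : ∀ e : ℝ, 2 * (j : ℝ) ≤ e → 0 ≤ r ^ e ∧ r ^ e ≤ (1 / 4 : ℝ) ^ j := by
    intro e he
    refine ⟨(Real.rpow_pos_of_pos h0 e).le, ?_⟩
    calc r ^ e ≤ r ^ (2 * (j : ℝ)) := Real.rpow_le_rpow_of_exponent_ge h0 (by linarith) he
      _ = (r ^ 2) ^ j := by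
        rw [Real.rpow_mul h0.le, Real.rpow_natCast, Real.rpow_ofNat]
      _ ≤ (1 / 4 : ℝ) ^ j := pow_le_pow_left₀ (by positivity) (by nlinarith) j
  have hj : (0 : ℝ) ≤ j := Nat.cast_nonneg j
  have hx : ∀ e : ℝ, 1 ≤ e → r ^ e ≤ 1 / 2 := by
    intro e he
    have := Real.rpow_le_rpow_of_exponent_ge h0 (by linarith) he
    rw [Real.rpow_one] at this
    linarith
  unfold nTerm
  push_cast
  have a1 := hx (1 + 2 * ((j : ℝ) + 1)) (by linarith)
  have a2 := hx (2 * ((j : ℝ) + 1) + 1) (by linarith)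
  have b1 := key (10 * ((j : ℝ) + 1) + 2) (by linarith)
  have b2 := key (1 + 8 * ((j : ℝ) + 1)) (by linarith)
  have b3 := key (6 * ((j : ℝ) + 1)) (by linarith)
  have b4 := key (2 * ((j : ℝ) + 1) - 2) (by linarith)
  have c1 := inv_bd _ a1 _ _ b1.1 b1.2 6
  have c2 := inv_bd _ a1 _ _ b2.1 b2.2 5
  have c3 := inv_bd _ a1 _ _ b3.1 b3.2 4
  have c4 := inv_bd _ a2 _ _ b4.1 b4.2 6
  have c5 := inv_bd _ a2 _ _ b4.1 b4.2 5
  have c6 := inv_bd _ a2 _ _ b4.1 b4.2 4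
  have hp : (0 : ℝ) < (1 / 4 : ℝ) ^ j := by positivity
  simp only [mul_div_assoc]
  rw [Real.norm_eq_abs, abs_le]
  constructor <;> linarith

lemma nTerm_zero_bd (r : ℝ) (h0 : 0 < r) (h1 : r < 1 / 2) :
    |nTerm r 0 - (36 / r ^ 2 + 288 / r)| ≤ 2000000 := by
  have hr : (0 : ℝ) < 1 - r := by linarith
  have hm : r ^ (-2 : ℝ) = 1 / r ^ 2 := by
    rw [Real.rpow_neg h0.le, Real.rpow_ofNat, one_div]
  have e : nTerm r 0 - (36 / r ^ 2 + 288 / r) =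
      120 * (r ^ 2 / (1 - r) ^ 6) + 96 * (r / (1 - r) ^ 5) + 12 * (1 / (1 - r) ^ 4)
      + 1200 * (1 / (1 - r) ^ 6) - 3600 * (r / (1 - r) ^ 6) + 5220 * (r ^ 2 / (1 - r) ^ 6)
      - 4104 * (r ^ 3 / (1 - r) ^ 6) + 1692 * (r ^ 4 / (1 - r) ^ 6)
      - 288 * (r ^ 5 / (1 - r) ^ 6) := by
    unfold nTerm
    norm_num [hm]
    field_simp
    ring
  have hx := h1.le
  have p : ∀ k : ℕ, 0 ≤ r ^ k ∧ r ^ k ≤ 1 := fun k =>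
    ⟨by positivity, pow_le_one₀ h0.le (by linarith)⟩
  have c1 := inv_bd r hx _ _ (p 2).1 (p 2).2 6
  have c2 := inv_bd r hx r 1 h0.le (by linarith) 5
  have c3 := inv_bd r hx 1 1 (by norm_num) le_rfl 4
  have c4 := inv_bd r hx 1 1 (by norm_num) le_rfl 6
  have c5 := inv_bd r hx r 1 h0.le (by linarith) 6
  have c6 := inv_bd r hx _ _ (p 3).1 (p 3).2 6
  have c7 := inv_bd r hx _ _ (p 4).1 (p 4).2 6
  have c8 := inv_bd r hx _ _ (p 5).1 (p 5).2 6
  rw [e, abs_le]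
  constructor <;> linarith

/-- `n(r) = −4/(π r³ log(r²)) + π⁻¹(36/r² + 288/r) + O(1)` as `r → 0⁺`. -/
theorem nVal_asymptotics :
    ∃ δ > (0 : ℝ), ∃ C : ℝ, ∀ r : ℝ, 0 < r → r < δ →
      |nVal r + 4 / (Real.pi * r ^ 3 * Real.log (r ^ 2)) -
          Real.pi⁻¹ * (36 / r ^ 2 + 288 / r)| ≤ C := by
  refine ⟨1 / 2, by norm_num, Real.pi⁻¹ * 2040000, ?_⟩
  intro r h0 h1
  have hg : HasSum (fun j : ℕ => 30000 * (1 / 4 : ℝ) ^ j) (30000 * (1 - 1 / 4)⁻¹) :=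
    (hasSum_geometric_of_lt_one (by norm_num) (by norm_num)).mul_left _
  have hb := tsum_of_norm_bounded hg (nTerm_succ_bd r h0 h1)
  have hs1 : Summable (fun j => nTerm r (j + 1)) :=
    Summable.of_norm_bounded hg.summable (nTerm_succ_bd r h0 h1)
  have hs : Summable (nTerm r) := (summable_nat_add_iff 1).1 hs1
  have hz := nTerm_zero_bd r h0 h1
  have hn : nVal r = -4 / (Real.pi * r ^ 3 * Real.log (r ^ 2)) +
      Real.pi⁻¹ * ∑' j : ℕ, nTerm r j := rfl
  have e : nVal r + 4 / (Real.pi * r ^ 3 * Real.log (r ^ 2)) -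
      Real.pi⁻¹ * (36 / r ^ 2 + 288 / r) = Real.pi⁻¹ *
      ((nTerm r 0 - (36 / r ^ 2 + 288 / r)) + ∑' j : ℕ, nTerm r (j + 1)) := by
    rw [hn, hs.tsum_eq_zero_add, neg_div]
    ring
  have hpi : (0 : ℝ) < Real.pi⁻¹ := inv_pos.2 Real.pi_pos
  rw [e, abs_mul, abs_of_pos hpi]
  refine mul_le_mul_of_nonneg_left ?_ hpi.le
  refine (abs_add_le _ _).trans ?_
  rw [Real.norm_eq_abs] at hb
  norm_num at hb
  linarith
end

section
/- Define, for 0 < r < 1, l(r) := 1/(π r^{3/2} log(r²)) + π⁻¹ Σ_{j=0}^∞ ( 2 r^{1/2+4j}/(1 − r^{1+2j})³ − 2 r^{−1/2+2j}/(1 − r^{2j+1})³ ). Then l(r) = 1/(π r^{3/2} log(r²)) + π⁻¹ ( −2 r^{−1/2} − 4 r^{1/2} − 8 r^{3/2} ) + O(r^{5/2}) as r → 0⁺. -/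
/-- The value `K_1(√r, √r)` of the first derivative of the Bergman kernel
of the annulus `P_r` at the point `√r`. -/
noncomputable def lVal (r : ℝ) : ℝ :=
  1 / (Real.pi * r ^ ((3 : ℝ) / 2) * Real.log (r ^ 2)) +
    Real.pi⁻¹ * ∑' j : ℕ,
      (2 * r ^ ((1 : ℝ) / 2 + 4 * (j : ℝ)) / (1 - r ^ (1 + 2 * (j : ℝ))) ^ 3 -
        2 * r ^ (-(1 : ℝ) / 2 + 2 * (j : ℝ)) / (1 - r ^ (2 * (j : ℝ) + 1)) ^ 3)

lemma aux_term (r : ℝ) (h0 : 0 < r) (h1 : r < 1 / 2) (j : ℕ) :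
    (2 * r ^ ((1 : ℝ) / 2 + 4 * (j : ℝ)) / (1 - r ^ (1 + 2 * (j : ℝ))) ^ 3 -
        2 * r ^ (-(1 : ℝ) / 2 + 2 * (j : ℝ)) / (1 - r ^ (2 * (j : ℝ) + 1)) ^ 3)
    = (-2 * r ^ (-(1 : ℝ) / 2)) * (r ^ (2 * j) / (1 - r ^ (2 * j + 1)) ^ 2) := by
  have e1 : r ^ ((1 : ℝ) / 2 + 4 * (j : ℝ)) = r ^ (-(1 : ℝ) / 2) * r ^ (4 * j + 1) := by
    rw [← Real.rpow_natCast r (4 * j + 1), ← Real.rpow_add h0]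
    congr 1; push_cast; ring
  have e2 : r ^ (-(1 : ℝ) / 2 + 2 * (j : ℝ)) = r ^ (-(1 : ℝ) / 2) * r ^ (2 * j) := by
    rw [← Real.rpow_natCast r (2 * j), ← Real.rpow_add h0]
    congr 1; push_cast; ring
  have e3 : r ^ (2 * (j : ℝ) + 1) = r ^ (2 * j + 1) := by
    rw [← Real.rpow_natCast r (2 * j + 1)]
    congr 1; push_cast; ring
  have e4 : r ^ (1 + 2 * (j : ℝ)) = r ^ (2 * j + 1) := by rw [add_comm, e3]
  rw [e1, e2, e3, e4]
  have hlt : r ^ (2 * j + 1) < 1 := pow_lt_one₀ h0.le (by linarith) (by omega)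
  have hne : 1 - r ^ (2 * j + 1) ≠ 0 := by linarith
  have e5 : r ^ (4 * j + 1) = r ^ (2 * j) * r ^ (2 * j + 1) := by
    rw [← pow_add]; congr 1; ring
  rw [e5]
  generalize r ^ (2 * j + 1) = q at *
  field_simp
  ring

lemma aux_bound (r : ℝ) (h0 : 0 < r) (h1 : r < 1 / 2) (j : ℕ) :
    0 ≤ r ^ (2 * j) / (1 - r ^ (2 * j + 1)) ^ 2 ∧
    r ^ (2 * j) / (1 - r ^ (2 * j + 1)) ^ 2 ≤ 4 * (r ^ 2) ^ j := by
  have hle : r ^ (2 * j + 1) ≤ 1 / 2 := by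
    have : r ^ (2 * j) ≤ 1 := pow_le_one₀ h0.le (by linarith)
    rw [pow_succ]; nlinarith
  refine ⟨by positivity, ?_⟩
  rw [← pow_mul]
  have hp : 0 < r ^ (2 * j) := by positivity
  have hq : (1 / 4 : ℝ) ≤ (1 - r ^ (2 * j + 1)) ^ 2 := by nlinarith
  rw [div_le_iff₀ (by linarith)]
  nlinarith

lemma aux_sum (r : ℝ) (h0 : 0 < r) (h1 : r < 1 / 2) :
    |(∑' j : ℕ, r ^ (2 * j) / (1 - r ^ (2 * j + 1)) ^ 2) - (1 + 2 * r + 4 * r ^ 2)|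
      ≤ 32 * r ^ 3 := by
  have hr2 : r ^ 2 < 1 / 4 := by nlinarith
  have hg : Summable (fun j : ℕ => 4 * (r ^ 2) ^ j) :=
    (summable_geometric_of_lt_one (by positivity) (by linarith)).mul_left 4
  have hs : Summable (fun j : ℕ => r ^ (2 * j) / (1 - r ^ (2 * j + 1)) ^ 2) :=
    Summable.of_nonneg_of_le (fun j => (aux_bound r h0 h1 j).1)
      (fun j => (aux_bound r h0 h1 j).2) hg
  have hsplit := hs.sum_add_tsum_nat_add 2
  have hT0 : 0 ≤ ∑' j : ℕ, r ^ (2 * (j + 2)) / (1 - r ^ (2 * (j + 2) + 1)) ^ 2 :=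
    tsum_nonneg (fun j => (aux_bound r h0 h1 (j + 2)).1)
  have hT1 : ∑' j : ℕ, r ^ (2 * (j + 2)) / (1 - r ^ (2 * (j + 2) + 1)) ^ 2
      ≤ ∑' j : ℕ, 4 * r ^ 4 * (r ^ 2) ^ j := by
    refine Summable.tsum_le_tsum (fun j => ?_) ((summable_nat_add_iff 2).2 hs)
      ((summable_geometric_of_lt_one (by positivity) (by linarith)).mul_left _)
    refine (aux_bound r h0 h1 (j + 2)).2.trans (le_of_eq ?_)
    ring
  rw [tsum_mul_left, tsum_geometric_of_lt_one (by positivity) (by linarith)] at hT1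
  have hinv : (1 - r ^ 2)⁻¹ ≤ 2 := by
    rw [inv_le_comm₀ (by linarith) (by norm_num)]; linarith
  have h3 : 0 < r ^ 3 := by positivity
  have hT2 : ∑' j : ℕ, r ^ (2 * (j + 2)) / (1 - r ^ (2 * (j + 2) + 1)) ^ 2 ≤ 8 * r ^ 3 := by
    refine hT1.trans ?_
    calc 4 * r ^ 4 * (1 - r ^ 2)⁻¹ ≤ 4 * r ^ 4 * 2 := by gcongr
      _ = 8 * r ^ 3 * r := by ring
      _ ≤ 8 * r ^ 3 := by nlinarith
  simp only [Finset.sum_range_succ, Finset.sum_range_zero] at hsplit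
  norm_num at hsplit
  have hA0 : 0 ≤ ((1 - r) ^ 2)⁻¹ - (1 + 2 * r + 3 * r ^ 2) ∧
      ((1 - r) ^ 2)⁻¹ - (1 + 2 * r + 3 * r ^ 2) ≤ 16 * r ^ 3 := by
    have hne : 1 - r ≠ 0 := by linarith
    have hq : (1 / 4 : ℝ) ≤ (1 - r) ^ 2 := by nlinarith
    have : ((1 - r) ^ 2)⁻¹ - (1 + 2 * r + 3 * r ^ 2) = r ^ 3 * (4 - 3 * r) / (1 - r) ^ 2 := by
      field_simp; ring
    rw [this]
    refine ⟨div_nonneg (mul_nonneg h3.le (by linarith)) (by positivity), ?_⟩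
    rw [div_le_iff₀ (by linarith)]
    nlinarith
  have hr3 : r ^ 3 < 1 / 8 := by nlinarith
  have hB0 : 0 ≤ r ^ 2 / (1 - r ^ 3) ^ 2 - r ^ 2 ∧
      r ^ 2 / (1 - r ^ 3) ^ 2 - r ^ 2 ≤ 8 * r ^ 3 := by
    have hne : 1 - r ^ 3 ≠ 0 := by linarith
    have hq : (1 / 4 : ℝ) ≤ (1 - r ^ 3) ^ 2 := by nlinarith
    have : r ^ 2 / (1 - r ^ 3) ^ 2 - r ^ 2 = r ^ 3 * (r ^ 2 * (2 - r ^ 3)) / (1 - r ^ 3) ^ 2 := by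
      field_simp; ring
    rw [this]
    refine ⟨div_nonneg (mul_nonneg h3.le (mul_nonneg (by positivity) (by linarith)))
      (by positivity), ?_⟩
    rw [div_le_iff₀ (by linarith)]
    have : r ^ 2 * (2 - r ^ 3) ≤ 2 := by nlinarith
    nlinarith
  rw [← hsplit, abs_le]
  constructor <;> linarith [hA0.1, hA0.2, hB0.1, hB0.2]

/-- `l(r) = 1/(π r^{3/2} log(r²)) + π⁻¹(−2r^{−1/2} − 4r^{1/2} − 8r^{3/2}) + O(r^{5/2})`
as `r → 0⁺`. -/
theorem lVal_asymptotics :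
    ∃ δ > (0 : ℝ), ∃ C : ℝ, ∀ r : ℝ, 0 < r → r < δ →
      |(lVal r - 1 / (Real.pi * r ^ ((3 : ℝ) / 2) * Real.log (r ^ 2)) -
          Real.pi⁻¹ * (-2 * r ^ (-(1 : ℝ) / 2) - 4 * r ^ ((1 : ℝ) / 2) -
            8 * r ^ ((3 : ℝ) / 2))) / r ^ ((5 : ℝ) / 2)| ≤ C := by
  refine ⟨1 / 2, by norm_num, 64, fun r h0 h1 => ?_⟩
  have hs : 0 < r ^ (-(1 : ℝ) / 2) := Real.rpow_pos_of_pos h0 _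
  have hpow : ∀ (n : ℕ) (x : ℝ), x = -(1 : ℝ) / 2 + n → r ^ x = r ^ (-(1 : ℝ) / 2) * r ^ n := by
    intro n x hx
    rw [← Real.rpow_natCast r n, ← Real.rpow_add h0, hx]
  have a1 := hpow 1 ((1 : ℝ) / 2) (by norm_num)
  have a2 := hpow 2 ((3 : ℝ) / 2) (by norm_num)
  have a3 := hpow 3 ((5 : ℝ) / 2) (by norm_num)
  have hS := aux_sum r h0 h1
  unfold lVal
  rw [tsum_congr (aux_term r h0 h1), tsum_mul_left, add_sub_cancel_left, a1, a2, a3]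
  generalize (∑' j : ℕ, r ^ (2 * j) / (1 - r ^ (2 * j + 1)) ^ 2) = S at *
  generalize r ^ (-(1 : ℝ) / 2) = s at *
  have h3 : 0 < r ^ 3 := by positivity
  have hpi := Real.pi_pos
  have key : (Real.pi⁻¹ * (-2 * s * S) - Real.pi⁻¹ * (-2 * s - 4 * (s * r ^ 1) - 8 * (s * r ^ 2)))
      / (s * r ^ 3) = (-2 * Real.pi⁻¹) * ((S - (1 + 2 * r + 4 * r ^ 2)) / r ^ 3) := by
    field_simp; ring
  rw [key, abs_mul, abs_div, abs_of_pos h3]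
  have hd : |S - (1 + 2 * r + 4 * r ^ 2)| / r ^ 3 ≤ 32 := by
    rw [div_le_iff₀ h3]; exact hS
  have hp1 : Real.pi⁻¹ ≤ 1 := inv_le_one_of_one_le₀ (by linarith [Real.pi_gt_three])
  have hp2 : |-2 * Real.pi⁻¹| ≤ 2 := by
    rw [abs_mul, abs_of_pos (inv_pos.2 hpi)]; norm_num; linarith
  calc _ ≤ (2 : ℝ) * 32 := by gcongr
    _ = 64 := by norm_num
end

section
/- Define, for 0 < r < 1, p(r) := −1/(π r^{3/5} log(r²)) + π⁻¹ Σ_{j=0}^∞ ( r^{2j}/(1 − r^{3/5+2j})² + r^{2j+4/5}/(1 − r^{2j+7/5})² ). Then p(r) = −1/(π r^{3/5} log(r²)) + π⁻¹ ( 1 + 2 r^{3/5} + r^{4/5} + 3 r^{6/5} ) + O(r^{9/5}) as r → 0⁺. -/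
/-- The value `K(r^{3/10}, r^{3/10})` of the Bergman kernel of the annulus `P_r`
at the point `r^{3/10}`. -/
noncomputable def pVal (r : ℝ) : ℝ :=
  -1 / (Real.pi * r ^ ((3 : ℝ) / 5) * Real.log (r ^ 2)) +
    Real.pi⁻¹ * ∑' j : ℕ,
      (r ^ (2 * (j : ℝ)) / (1 - r ^ ((3 : ℝ) / 5 + 2 * (j : ℝ))) ^ 2 +
        r ^ (2 * (j : ℝ) + (4 : ℝ) / 5) / (1 - r ^ (2 * (j : ℝ) + (7 : ℝ) / 5)) ^ 2)

/-- The summand in terms of `x = r^{1/5}` with natural powers. -/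
noncomputable def pTerm (x : ℝ) (j : ℕ) : ℝ :=
  (x ^ 10) ^ j / (1 - x ^ 3 * (x ^ 10) ^ j) ^ 2 +
    (x ^ 10) ^ j * x ^ 4 / (1 - (x ^ 10) ^ j * x ^ 7) ^ 2

lemma inv_sq_le_four {u : ℝ} (hu : u ≤ 1 / 2) : ((1 - u) ^ 2)⁻¹ ≤ 4 := by
  have h : (1 / 4 : ℝ) ≤ (1 - u) ^ 2 := by nlinarith
  have := inv_anti₀ (by norm_num) h
  norm_num at this ⊢
  exact this

lemma pTerm_bound {x : ℝ} (h0 : 0 < x) (h1 : x < 1 / 2) (j : ℕ) :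
    0 ≤ pTerm x j ∧ pTerm x j ≤ 8 * (x ^ 10) ^ j := by
  have hx1 : x ≤ 1 := by linarith
  have hq0 : 0 ≤ (x ^ 10) ^ j := by positivity
  have hq1 : (x ^ 10) ^ j ≤ 1 := pow_le_one₀ (by positivity) (pow_le_one₀ h0.le hx1)
  have h3 : x ^ 3 ≤ x := pow_le_of_le_one h0.le hx1 (by norm_num)
  have h7 : x ^ 7 ≤ x := pow_le_of_le_one h0.le hx1 (by norm_num)
  have h4 : x ^ 4 ≤ 1 := pow_le_one₀ h0.le hx1
  have p3 : 0 ≤ x ^ 3 := by positivity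
  have p7 : 0 ≤ x ^ 7 := by positivity
  have p4 : 0 ≤ x ^ 4 := by positivity
  unfold pTerm
  generalize (x ^ 10) ^ j = q at *
  refine ⟨by positivity, ?_⟩
  have a := inv_sq_le_four (u := x ^ 3 * q) (by nlinarith)
  have b := inv_sq_le_four (u := q * x ^ 7) (by nlinarith)
  rw [div_eq_mul_inv, div_eq_mul_inv]
  have c1 := mul_le_mul_of_nonneg_left a hq0
  have c2 := mul_le_mul_of_nonneg_left b (mul_nonneg hq0 p4)
  have c3 : q * x ^ 4 ≤ q := mul_le_of_le_one_right hq0 h4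
  linarith

lemma pSum_bound {x : ℝ} (h0 : 0 < x) (h1 : x < 1 / 2) :
    |∑' j, pTerm x j - (1 + 2 * x ^ 3 + x ^ 4 + 3 * x ^ 6)| ≤ 40 * x ^ 9 := by
  have hx1 : x ≤ 1 := by linarith
  have hQ : x ^ 10 ≤ 1 / 2 := (pow_le_of_le_one h0.le hx1 (by norm_num)).trans h1.le
  have hQ0 : 0 < x ^ 10 := by positivity
  have hg : Summable fun j : ℕ => 8 * (x ^ 10) ^ j :=
    (summable_geometric_of_lt_one hQ0.le (by linarith)).mul_left 8
  have hs : Summable (pTerm x) :=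
    Summable.of_nonneg_of_le (fun j => (pTerm_bound h0 h1 j).1)
      (fun j => (pTerm_bound h0 h1 j).2) hg
  rw [hs.tsum_eq_zero_add]
  have t0 : 0 ≤ ∑' j, pTerm x (j + 1) := tsum_nonneg fun j => (pTerm_bound h0 h1 _).1
  have t1 : ∑' j, pTerm x (j + 1) ≤ 16 * x ^ 10 := by
    have hle : ∑' j, pTerm x (j + 1) ≤ ∑' j : ℕ, 8 * x ^ 10 * (x ^ 10) ^ j := by
      refine Summable.tsum_le_tsum (fun j => ?_) ((summable_nat_add_iff 1).2 hs)
        ((summable_geometric_of_lt_one hQ0.le (by linarith)).mul_left _)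
      refine (pTerm_bound h0 h1 (j + 1)).2.trans (le_of_eq ?_)
      rw [pow_succ]; ring
    rw [tsum_mul_left, tsum_geometric_of_lt_one hQ0.le (by linarith)] at hle
    have hi : (1 - x ^ 10)⁻¹ ≤ 2 := by
      have := inv_anti₀ (by norm_num) (show (1 / 2 : ℝ) ≤ 1 - x ^ 10 by linarith)
      norm_num at this ⊢
      exact this
    have := mul_le_mul_of_nonneg_left hi (show 0 ≤ 8 * x ^ 10 by positivity)
    linarith
  have h3 : x ^ 3 ≤ 1 / 2 := (pow_le_of_le_one h0.le hx1 (by norm_num)).trans h1.le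
  have h7 : x ^ 7 ≤ 1 / 2 := (pow_le_of_le_one h0.le hx1 (by norm_num)).trans h1.le
  have p3 : 0 < x ^ 3 := by positivity
  have p7 : 0 < x ^ 7 := by positivity
  have n3 : 1 - x ^ 3 ≠ 0 := by linarith
  have n7 : 1 - x ^ 7 ≠ 0 := by linarith
  have e : pTerm x 0 - (1 + 2 * x ^ 3 + x ^ 4 + 3 * x ^ 6) =
      x ^ 9 * (4 - 3 * x ^ 3) * ((1 - x ^ 3) ^ 2)⁻¹ +
        x ^ 11 * (2 - x ^ 7) * ((1 - x ^ 7) ^ 2)⁻¹ := by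
    simp only [pTerm, pow_zero, mul_one, one_mul]
    field_simp
    ring
  have a := inv_sq_le_four h3
  have b := inv_sq_le_four h7
  have a0 : 0 ≤ ((1 - x ^ 3) ^ 2)⁻¹ := by positivity
  have b0 : 0 ≤ ((1 - x ^ 7) ^ 2)⁻¹ := by positivity
  have A0 : 0 ≤ x ^ 9 * (4 - 3 * x ^ 3) * ((1 - x ^ 3) ^ 2)⁻¹ :=
    mul_nonneg (mul_nonneg (by positivity) (by linarith)) a0
  have B0 : 0 ≤ x ^ 11 * (2 - x ^ 7) * ((1 - x ^ 7) ^ 2)⁻¹ :=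
    mul_nonneg (mul_nonneg (by positivity) (by linarith)) b0
  have A1 : x ^ 9 * (4 - 3 * x ^ 3) * ((1 - x ^ 3) ^ 2)⁻¹ ≤ x ^ 9 * 4 * 4 := by
    gcongr
    linarith
  have B1 : x ^ 11 * (2 - x ^ 7) * ((1 - x ^ 7) ^ 2)⁻¹ ≤ x ^ 11 * 2 * 4 := by
    gcongr
    linarith
  have k10 : x ^ 10 ≤ x ^ 9 := pow_le_pow_of_le_one h0.le hx1 (by norm_num)
  have k11 : x ^ 11 ≤ x ^ 9 := pow_le_pow_of_le_one h0.le hx1 (by norm_num)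
  rw [abs_le]
  constructor <;> linarith [pow_pos h0 9]

/-- `p(r) = −1/(π r^{3/5} log(r²)) + π⁻¹(1 + 2r^{3/5} + r^{4/5} + 3r^{6/5}) + O(r^{9/5})`
as `r → 0⁺`. -/
theorem pVal_asymptotics :
    ∃ δ > (0 : ℝ), ∃ C : ℝ, ∀ r : ℝ, 0 < r → r < δ →
      |(pVal r + 1 / (Real.pi * r ^ ((3 : ℝ) / 5) * Real.log (r ^ 2)) -
          Real.pi⁻¹ * (1 + 2 * r ^ ((3 : ℝ) / 5) + r ^ ((4 : ℝ) / 5) +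
            3 * r ^ ((6 : ℝ) / 5))) / r ^ ((9 : ℝ) / 5)| ≤ C := by
  refine ⟨1 / 32, by norm_num, 40, fun r hr hr1 => ?_⟩
  obtain ⟨x, hx0, rfl⟩ : ∃ x : ℝ, 0 < x ∧ x ^ 5 = r :=
    ⟨r ^ ((1 : ℝ) / 5), by positivity, by
      rw [← Real.rpow_natCast, ← Real.rpow_mul hr.le]; norm_num⟩
  have hx1 : x < 1 / 2 := by
    refine lt_of_pow_lt_pow_left₀ 5 (by norm_num) ?_
    norm_num at hr1 ⊢
    exact hr1
  have key : ∀ (s : ℝ) (n : ℕ), 5 * s = n → (x ^ 5) ^ s = x ^ n := by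
    intro s n h
    rw [← Real.rpow_natCast x 5, ← Real.rpow_mul hx0.le, ← Real.rpow_natCast x n, ← h]
    norm_num
  have hsum : pVal (x ^ 5) = -1 / (Real.pi * (x ^ 5) ^ ((3 : ℝ) / 5) * Real.log ((x ^ 5) ^ 2)) +
      Real.pi⁻¹ * ∑' j, pTerm x j := by
    unfold pVal
    congr 3
    funext j
    rw [key (2 * (j : ℝ)) (10 * j) (by push_cast; ring),
      key (3 / 5 + 2 * (j : ℝ)) (3 + 10 * j) (by push_cast; ring),
      key (2 * (j : ℝ) + 4 / 5) (10 * j + 4) (by push_cast; ring),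
      key (2 * (j : ℝ) + 7 / 5) (10 * j + 7) (by push_cast; ring)]
    simp only [pTerm, pow_add, pow_mul]
  rw [hsum, key (3 / 5) 3 (by norm_num), key (4 / 5) 4 (by norm_num),
    key (6 / 5) 6 (by norm_num), key (9 / 5) 9 (by norm_num)]
  have hb := pSum_bound hx0 hx1
  have hp : Real.pi⁻¹ ≤ 1 := inv_le_one_of_one_le₀ (by linarith [Real.pi_gt_three])
  have hp0 : 0 ≤ Real.pi⁻¹ := by positivity
  rw [abs_div, abs_of_pos (pow_pos hx0 9), div_le_iff₀ (pow_pos hx0 9)]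
  have e : -1 / (Real.pi * x ^ 3 * Real.log ((x ^ 5) ^ 2)) + Real.pi⁻¹ * ∑' j, pTerm x j +
      1 / (Real.pi * x ^ 3 * Real.log ((x ^ 5) ^ 2)) -
      Real.pi⁻¹ * (1 + 2 * x ^ 3 + x ^ 4 + 3 * x ^ 6) =
      Real.pi⁻¹ * (∑' j, pTerm x j - (1 + 2 * x ^ 3 + x ^ 4 + 3 * x ^ 6)) := by
    ring
  rw [e, abs_mul, abs_of_nonneg hp0]
  exact (mul_le_of_le_one_left (abs_nonneg _) hp).trans hb
end
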